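/- arXiv:math/0409446 — 3 statements merged into one kernel-verified Lean document; each statement's English description precedes it below -/
import Mathlib

section
/- Let A be a real m×n matrix. Then exactly one of the following two conditions holds: (1) there exists a nonzero row vector x ∈ ℝ^m with x ≥ 0 componentwise and xA ≤ 0 componentwise; (2) there exists a column vector y ∈ ℝⁿ with y ≥ 0 componentwise such that every entry of Ay is strictly positive. -/
theorem farkas_minkowski_real (m n : ℕ) (A : Matrix (Fin m) (Fin n) ℝ) :
    Xor'
      (∃ x : Fin m → ℝ, x ≠ 0 ∧ (∀ i, 0 ≤ x i) ∧ ∀ j, Matrix.vecMul x A j ≤ 0)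
      (∃ y : Fin n → ℝ, (∀ j, 0 ≤ y j) ∧ ∀ i, 0 < Matrix.mulVec A y i) := by
  refine (xor_iff_or_and_not_and _ _).mpr ?_
  constructor
  · by_contra hcon
    obtain ⟨h1, h2⟩ := not_or.mp hcon
    let P : Set (Fin m → ℝ) := Set.pi Set.univ (fun _ => Set.Ioi (0 : ℝ))
    let T : Set (Fin m → ℝ) := (Matrix.mulVecLin A) '' (Set.Ici (0 : Fin n → ℝ))
    have hP : Convex ℝ P := convex_pi (fun i _ => convex_Ioi 0)
    have hPo : IsOpen P := isOpen_set_pi Set.finite_univ (fun i _ => isOpen_Ioi)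
    have hT : Convex ℝ T := (convex_Ici 0).linear_image _
    have hd : Disjoint P T := by
      rw [Set.disjoint_left]
      rintro a ha ⟨y, hy, rfl⟩
      exact h2 ⟨y, fun j => hy j, fun i => ha i (Set.mem_univ i)⟩
    obtain ⟨f, u, hfu, huf⟩ := geometric_hahn_banach_open hP hPo hT hd
    have hu : u ≤ 0 := by
      have := huf 0 ⟨0, Set.self_mem_Ici, by simp⟩
      simpa using this
    have hneg : ∀ a : Fin m → ℝ, (∀ i, 0 < a i) → f a < 0 := fun a ha =>
      lt_of_lt_of_le (hfu a (fun i _ => ha i)) hu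
    have hone : f (fun _ => 1) < 0 := hneg _ (fun _ => one_pos)
    have hnn : ∀ a : Fin m → ℝ, (∀ i, 0 ≤ a i) → f a ≤ 0 := by
      intro a ha
      by_contra hc
      push Not at hc
      set o : Fin m → ℝ := fun _ => 1 with ho
      have hpos : 0 < f a / (-(f o)) := div_pos hc (by linarith)
      have := hneg (a + (f a / (-(f o))) • o) (fun i => by
        have := ha i
        simp only [Pi.add_apply, Pi.smul_apply, ho, smul_eq_mul, mul_one]
        exact add_pos_of_nonneg_of_pos this hpos)
      rw [map_add, map_smul, smul_eq_mul] at this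
      have e : f a / (-(f o)) * f o = - f a := by
        have : f o ≠ 0 := hone.ne
        field_simp
      linarith
    have hTn : ∀ y : Fin n → ℝ, (∀ j, 0 ≤ y j) → 0 ≤ f (A.mulVec y) := by
      intro y hy
      by_contra hc
      push Not at hc
      have hk : 0 ≤ (u - 1) / f (A.mulVec y) :=
        div_nonneg_of_nonpos (by linarith) hc.le
      have := huf _ ⟨((u - 1) / f (A.mulVec y)) • y, fun j => mul_nonneg hk (hy j), rfl⟩
      rw [map_smul, map_smul, smul_eq_mul, Matrix.mulVecLin_apply,
        div_mul_cancel₀ _ hc.ne] at this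
      linarith
    have hf : ∀ a : Fin m → ℝ, f a = ∑ i, a i * f (Pi.single i 1) := by
      intro a
      conv_lhs => rw [pi_eq_sum_univ' a]
      simp [map_sum, map_smul]
    refine h1 ⟨fun i => - f (Pi.single i 1), ?_, ?_, ?_⟩
    · intro h0
      rw [hf] at hone
      have : ∀ i, f (Pi.single i (1 : ℝ)) = 0 := fun i => by
        have := congrFun h0 i
        simpa using this
      simp [this] at hone
    · intro i
      have := hnn (Pi.single i 1) (fun j => by
        by_cases h : j = i
        · subst h; simp
        · simp [h])
      linarith
    · intro j
      have := hTn (Pi.single j 1) (fun k => by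
        by_cases h : k = j
        · subst h; simp
        · simp [h])
      rw [hf] at this
      simp only [Matrix.mulVec_single_one, Matrix.col_apply] at this
      simp only [Matrix.vecMul, dotProduct, neg_mul, Finset.sum_neg_distrib]
      simp only [mul_comm (f _)]
      linarith
  · rintro ⟨⟨x, hx0, hx, hxA⟩, y, hy, hA⟩
    have h1 : dotProduct (Matrix.vecMul x A) y ≤ 0 :=
      Finset.sum_nonpos (fun j _ => mul_nonpos_of_nonpos_of_nonneg (hxA j) (hy j))
    rw [← Matrix.dotProduct_mulVec] at h1
    obtain ⟨i, hi⟩ := Function.ne_iff.mp hx0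
    have h2 : 0 < dotProduct x (A.mulVec y) :=
      Finset.sum_pos' (fun i _ => mul_nonneg (hx i) (hA i).le)
        ⟨i, Finset.mem_univ i, mul_pos (lt_of_le_of_ne (hx i) (Ne.symm hi)) (hA i)⟩
    linarith
end

section
/- Let A be a real m×n matrix. Then exactly one of the following two conditions holds: (1) there exists a nonzero row vector x ∈ ℝ^m with x ≥ 0 componentwise and xA ≤ 0 componentwise; (2) there exists a column vector y ∈ ℤⁿ all of whose entries are strictly positive integers such that every entry of Ay is strictly positive. -/
theorem fm_coeff_nonneg {n : ℕ} (d : Fin n → ℝ) (u : ℝ)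
    (h : ∀ y : Fin n → ℝ, (∀ j, 0 < y j) → u ≤ d ⬝ᵥ y) (j : Fin n) : 0 ≤ d j := by
  by_contra hneg
  push Not at hneg
  have key : ∀ t : ℝ, 0 ≤ t → u ≤ d ⬝ᵥ (fun _ => 1) + d j * t := by
    intro t ht
    have := h ((fun _ => 1) + Pi.single j t) (by
      intro k
      by_cases hk : k = j
      · subst hk; simp; linarith
      · simp [hk])
    rwa [dotProduct_add, dotProduct_single] at this
  set s := d ⬝ᵥ (fun _ => (1 : ℝ))
  have h1 := key ((|s - u| + 1) / (-d j)) (div_nonneg (by positivity) (by linarith))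
  have h2 : d j * ((|s - u| + 1) / (-d j)) = -(|s - u| + 1) := by
    have hne : d j ≠ 0 := hneg.ne
    field_simp
  rw [h2] at h1
  linarith [le_abs_self (s - u)]

theorem fm_real (m n : ℕ) (A : Matrix (Fin m) (Fin n) ℝ)
    (h : ¬ ∃ y : Fin n → ℝ, (∀ j, 0 < y j) ∧ ∀ i, 0 < Matrix.mulVec A y i) :
    ∃ x : Fin m → ℝ, x ≠ 0 ∧ (∀ i, 0 ≤ x i) ∧ ∀ j, Matrix.vecMul x A j ≤ 0 := by
  let P : (k : ℕ) → Set (Fin k → ℝ) := fun k => Set.univ.pi fun _ => Set.Ioi 0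
  have hPc : ∀ k, Convex ℝ (P k) := fun k => convex_pi fun _ _ => convex_Ioi 0
  have hPo : IsOpen (P m) := isOpen_set_pi Set.finite_univ fun _ _ => isOpen_Ioi
  have hmem : ∀ k (y : Fin k → ℝ), y ∈ P k ↔ ∀ j, 0 < y j := by
    intro k y; simp [P]
  obtain ⟨f, u, hf1, hf2⟩ := geometric_hahn_banach_open (hPc m) hPo
    ((hPc n).linear_image (Matrix.mulVecLin A)) (by
      rw [Set.disjoint_left]
      rintro _ hp ⟨y, hy, rfl⟩
      exact h ⟨y, (hmem _ _).1 hy, by simpa using (hmem _ _).1 hp⟩)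
  let c : Fin m → ℝ := fun i => f (Pi.single i 1)
  have hfc : ∀ v, f v = c ⬝ᵥ v := by
    intro v
    conv_lhs => rw [pi_eq_sum_univ' v]
    simp only [map_sum, map_smul, dotProduct, c, smul_eq_mul]
    refine Finset.sum_congr rfl fun i _ => ?_
    rw [mul_comm]
  refine ⟨-c, ?_, ?_, ?_⟩
  · intro hc
    have hc0 : c = 0 := by simpa using hc
    have a := hf1 (fun _ => 1) ((hmem _ _).2 fun _ => one_pos)
    have b := hf2 _ ⟨(fun _ => 1), (hmem _ _).2 fun _ => one_pos, rfl⟩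
    rw [hfc, hc0, zero_dotProduct] at a b
    linarith
  · refine fm_coeff_nonneg _ (-u) fun y hy => ?_
    have a := hf1 y ((hmem _ _).2 hy)
    rw [hfc] at a
    rw [neg_dotProduct]
    linarith
  · intro j
    have := fm_coeff_nonneg (Matrix.vecMul c A) u (fun y hy => by
      have b := hf2 _ ⟨y, (hmem _ _).2 hy, rfl⟩
      rwa [hfc, Matrix.mulVecLin_apply, Matrix.dotProduct_mulVec] at b) j
    rw [Matrix.neg_vecMul, Pi.neg_apply]
    linarith

open Filter Topology in
theorem fm_int (m n : ℕ) (A : Matrix (Fin m) (Fin n) ℝ)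
    (h : ∃ y : Fin n → ℝ, (∀ j, 0 < y j) ∧ ∀ i, 0 < Matrix.mulVec A y i) :
    ∃ y : Fin n → ℤ, (∀ j, 0 < y j) ∧
        ∀ i, 0 < Matrix.mulVec A (fun j => (y j : ℝ)) i := by
  obtain ⟨y, hy, hA⟩ := h
  have hT : Tendsto (fun (t : ℝ) (j : Fin n) => (⌈y j * t⌉₊ : ℝ) / t) atTop (𝓝 y) :=
    tendsto_pi_nhds.2 fun j => tendsto_nat_ceil_mul_div_atTop (hy j).le
  have hc : Continuous (fun v : Fin n → ℝ => Matrix.mulVec A v) := by fun_prop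
  have hT2 := tendsto_pi_nhds.1 ((hc.tendsto y).comp hT)
  have hev : ∀ᶠ t : ℝ in atTop, ∀ i, 0 < Matrix.mulVec A (fun j => (⌈y j * t⌉₊ : ℝ) / t) i :=
    eventually_all.2 fun i => (hT2 i).eventually (lt_mem_nhds (hA i))
  obtain ⟨t, ht, ht0⟩ := (hev.and (eventually_gt_atTop 0)).exists
  refine ⟨fun j => (⌈y j * t⌉₊ : ℤ), fun j => ?_, fun i => ?_⟩
  · have := Nat.ceil_pos.2 (mul_pos (hy j) ht0)
    exact Int.natCast_pos.2 this
  · have h1 : (fun j => (((⌈y j * t⌉₊ : ℕ) : ℤ) : ℝ)) = t • fun j => (⌈y j * t⌉₊ : ℝ) / t := by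
      ext j
      simp only [Pi.smul_apply, smul_eq_mul, Int.cast_natCast]
      field_simp
    rw [h1, Matrix.mulVec_smul]
    exact mul_pos ht0 (ht i)

theorem farkas_minkowski_integer (m n : ℕ) (A : Matrix (Fin m) (Fin n) ℝ) :
    Xor'
      (∃ x : Fin m → ℝ, x ≠ 0 ∧ (∀ i, 0 ≤ x i) ∧ ∀ j, Matrix.vecMul x A j ≤ 0)
      (∃ y : Fin n → ℤ, (∀ j, 0 < y j) ∧
        ∀ i, 0 < Matrix.mulVec A (fun j => (y j : ℝ)) i) := by
  refine (xor_iff_or_and_not_and _ _).2 ⟨?_, ?_⟩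
  · by_cases h : ∃ y : Fin n → ℝ, (∀ j, 0 < y j) ∧ ∀ i, 0 < Matrix.mulVec A y i
    · exact Or.inr (fm_int m n A h)
    · exact Or.inl (fm_real m n A h)
  · rintro ⟨⟨x, hx0, hx, hxA⟩, y, hy, hAy⟩
    obtain ⟨i, hi⟩ := Function.ne_iff.1 hx0
    have h1 : 0 < x ⬝ᵥ Matrix.mulVec A (fun j => (y j : ℝ)) :=
      Finset.sum_pos' (fun k _ => mul_nonneg (hx k) (hAy k).le)
        ⟨i, Finset.mem_univ _, mul_pos (lt_of_le_of_ne (hx i) (Ne.symm hi)) (hAy i)⟩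
    rw [Matrix.dotProduct_mulVec] at h1
    have h2 : Matrix.vecMul x A ⬝ᵥ (fun j => (y j : ℝ)) ≤ 0 :=
      Finset.sum_nonpos fun j _ =>
        mul_nonpos_of_nonpos_of_nonneg (hxA j) (Int.cast_nonneg (hy j).le)
    linarith
end

section
/- Let n > 1 and let y = (y₁,…,yₙ) be a vector of strictly positive integers whose greatest common divisor equals 1. Then there exists an n×n matrix Y with nonnegative integer entries and determinant equal to 1 such that one of the columns of Y is equal to y. -/
theorem completion_aux (n : ℕ) (N : ℕ) : ∀ (y : Fin n → ℤ), (∀ i, 0 ≤ y i) →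
    (∀ d : ℤ, (∀ i, d ∣ y i) → d ∣ 1) → ∑ i, y i = N →
    ∃ Y : Matrix (Fin n) (Fin n) ℤ,
      (∀ i j, 0 ≤ Y i j) ∧ Y.det = 1 ∧ ∃ c : Fin n, ∀ i, Y i c = y i := by
  induction N using Nat.strong_induction_on with
  | _ N ih =>
  intro y hy hd hs
  by_cases h : ∃ i j, i ≠ j ∧ 0 < y j ∧ y j ≤ y i
  · obtain ⟨i, j, hij, hj, hle⟩ := h
    have hsum : ∑ k, Function.update y i (y i - y j) k = N - y j := by
      rw [Finset.sum_update_of_mem (Finset.mem_univ i), ← hs,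
        ← Finset.add_sum_erase _ _ (Finset.mem_univ i), Finset.sdiff_singleton_eq_erase]
      ring
    have hnn : ∀ k, 0 ≤ Function.update y i (y i - y j) k := by
      intro k
      by_cases hk : k = i
      · subst hk; simp; exact hle
      · simp [hk, hy]
    have h0 : 0 ≤ (N : ℤ) - y j := hsum ▸ Finset.sum_nonneg (fun k _ => hnn k)
    obtain ⟨Y, hY, hdet, c, hc⟩ := ih ((N : ℤ) - y j).toNat (by omega)
      (Function.update y i (y i - y j)) hnn
      (by
        intro d h
        apply hd
        have hdj : d ∣ y j := by simpa [hij.symm] using h j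
        intro k
        by_cases hk : k = i
        · subst hk
          have := h k
          simp only [Function.update_self] at this
          exact (dvd_sub_left hdj).1 this
        · simpa [hk] using h k)
      (by rw [hsum]; omega)
    refine ⟨Y.updateRow i (Y i + Y j), ?_, ?_, c, ?_⟩
    · intro a b
      by_cases ha : a = i
      · subst ha; simp; exact add_nonneg (hY _ _) (hY _ _)
      · simp [ha, hY]
    · rw [Matrix.det_updateRow_add_self _ hij, hdet]
    · intro a
      have hcj := hc j
      have hca := hc a
      by_cases ha : a = i
      · subst ha; simp [hij.symm] at *; omega
      · simpa [ha] using hca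
  · push Not at h
    have : ∃ k, y k ≠ 0 := by
      by_contra! h0
      have := hd 0 (by simp [h0])
      simp at this
    obtain ⟨k, hk⟩ := this
    have hkpos : 0 < y k := lt_of_le_of_ne (hy k) hk.symm
    have hz : ∀ i, i ≠ k → y i = 0 := by
      intro i hi
      by_contra hne
      have hip : 0 < y i := lt_of_le_of_ne (hy i) (Ne.symm hne)
      have h1 := h i k hi hkpos
      have h2 := h k i hi.symm hip
      omega
    have hk1 : y k = 1 := by
      refine Int.eq_one_of_dvd_one hkpos.le (hd _ fun i => ?_)
      by_cases hi : i = k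
      · rw [hi]
      · simp [hz i hi]
    refine ⟨1, ?_, Matrix.det_one, k, ?_⟩
    · intro a b
      rw [Matrix.one_apply]; split_ifs <;> simp
    · intro a
      by_cases ha : a = k
      · subst ha; simp [hk1]
      · simp [ha, hz a ha]

theorem completion_to_unimodular_nonneg_matrix
    (n : ℕ) (hn : 1 < n) (y : Fin n → ℤ)
    (hy : ∀ i, 0 < y i) (hgcd : Finset.univ.gcd y = 1) :
    ∃ Y : Matrix (Fin n) (Fin n) ℤ,
      (∀ i j, 0 ≤ Y i j) ∧ Y.det = 1 ∧ ∃ c : Fin n, ∀ i, Y i c = y i := by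
  refine completion_aux n (∑ i, y i).toNat y (fun i => (hy i).le) ?_ ?_
  · intro d h
    rw [← hgcd]
    exact Finset.dvd_gcd (fun i _ => h i)
  · exact (Int.toNat_of_nonneg (Finset.sum_nonneg (fun i _ => (hy i).le))).symm
end
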